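/- Let Γ_1 be a symmetric d×d real matrix with zero diagonal that is strictly conditionally negative definite and let Q_2 ∈ 𝒬. Define the surrogate Kullback–Leibler divergence KL(Γ_1, Q_2) = (1/2)⟨Γ_1, Q_2⟩ − (d−1)/2 − (1/2) log det(CM(Γ_1)) − (1/2) log τ(Q_2). Then KL(Γ_1, Q_2) ≥ 0, with equality if and only if Γ_1 = Γ(Q_2). -/

import Mathlib

open Matrix Finset

/-- `Θ(Q)`: `Θ(Q)_{ij} = −Q_{ij}` for `i ≠ j` and `Θ(Q)_{ii} = ∑_{j≠i} Q_{ij}`. -/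
noncomputable def thetaOf {d : ℕ} (Q : Matrix (Fin d) (Fin d) ℝ) :
    Matrix (Fin d) (Fin d) ℝ :=
  Matrix.of fun i j => if i = j then ∑ l ∈ univ.filter (fun l => l ≠ i), Q i l else -Q i j

/-- Membership in `𝒬`: symmetric, zero diagonal, and `xᵀΘ(Q)x > 0` for every nonzero
`x` with `∑ᵢ xᵢ = 0`. -/
def memQ {d : ℕ} (Q : Matrix (Fin d) (Fin d) ℝ) : Prop :=
  Q.IsSymm ∧ (∀ i, Q i i = 0) ∧
    ∀ x : Fin d → ℝ, x ≠ 0 → (∑ i, x i) = 0 → 0 < x ⬝ᵥ (thetaOf Q).mulVec x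

/-- The centering matrix `P = I − (1/d)𝟙𝟙ᵀ`. -/
noncomputable def Pmat (d : ℕ) : Matrix (Fin d) (Fin d) ℝ :=
  1 - ((d : ℝ)⁻¹) • Matrix.of (fun _ _ : Fin d => (1 : ℝ))

/-- `S` is the matrix `Σ(Q)`: the unique symmetric matrix with `Σ(Q)𝟙 = 0` and
`Θ(Q)Σ(Q) = P`. -/
def isSigmaOf {d : ℕ} (Q S : Matrix (Fin d) (Fin d) ℝ) : Prop :=
  S.IsSymm ∧ S.mulVec (fun _ => 1) = 0 ∧ thetaOf Q * S = Pmat d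

/-- The variogram associated with `Σ`: `Γ_{ij} = Σ_{ii} + Σ_{jj} − 2Σ_{ij}`. -/
noncomputable def gammaOf {d : ℕ} (S : Matrix (Fin d) (Fin d) ℝ) :
    Matrix (Fin d) (Fin d) ℝ :=
  Matrix.of fun i j => S i i + S j j - 2 * S i j

/-- The inner product `⟨A, B⟩ = ∑_{i<j} A_{ij} B_{ij}` on symmetric matrices with
zero diagonal. -/
noncomputable def sinner {d : ℕ} (A B : Matrix (Fin d) (Fin d) ℝ) : ℝ :=
  ∑ p ∈ univ.filter (fun p : Fin d × Fin d => p.1 < p.2), A p.1 p.2 * B p.1 p.2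

open Classical in
/-- The spanning tree polynomial `τ(Q) = ∑_T ∏_{{i,j}∈T} Q_{ij}`, summed over all
spanning trees of the complete graph on `{1, …, d}`. -/
noncomputable def tau {d : ℕ} (Q : Matrix (Fin d) (Fin d) ℝ) : ℝ :=
  ∑ T ∈ (univ : Finset (SimpleGraph (Fin d))).filter (fun T => T.IsTree),
    ∏ p ∈ univ.filter (fun p : Fin d × Fin d => p.1 < p.2 ∧ T.Adj p.1 p.2), Q p.1 p.2

/-- The Cayley–Menger matrix of `Γ`. -/
noncomputable def CM {d : ℕ} (Γ : Matrix (Fin d) (Fin d) ℝ) :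
    Matrix (Fin (d + 1)) (Fin (d + 1)) ℝ :=
  Matrix.of fun a b =>
    if ha : (a : ℕ) < d then
      (if hb : (b : ℕ) < d then -Γ ⟨a, ha⟩ ⟨b, hb⟩ / 2 else 1)
    else (if (b : ℕ) < d then -1 else 0)

/-- Membership in the cone `𝒞^d` of symmetric matrices with zero diagonal that are
strictly conditionally negative definite. -/
def memC {d : ℕ} (Γ : Matrix (Fin d) (Fin d) ℝ) : Prop :=
  Γ.IsSymm ∧ (∀ i, Γ i i = 0) ∧
    ∀ x : Fin d → ℝ, x ≠ 0 → (∑ i, x i) = 0 → x ⬝ᵥ Γ.mulVec x < 0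

/-! ### Weighted matrix-tree theorem -/

/-- parent functions admitting a strictly decreasing height -/
def AcyF {n : ℕ} (f : Fin n → Fin (n + 1)) : Prop :=
  ∃ h : Fin (n + 1) → ℕ, ∀ i, h (f i) < h i.succ

/-- the matrix with rows `e_i - e_{f i}` -/
noncomputable def Mf {n : ℕ} (f : Fin n → Fin (n + 1)) : Matrix (Fin n) (Fin n) ℝ :=
  Matrix.of fun i k => (if i = k then 1 else 0) - (if f i = k.succ then 1 else 0)

lemma det_Mf_of_acy {n : ℕ} (f : Fin n → Fin (n + 1)) (hf : AcyF f) : (Mf f).det = 1 := by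
  obtain ⟨h, hh⟩ := hf
  have hb : BlockTriangular (Mf f) (fun i => OrderDual.toDual (h i.succ)) := by
    intro i j hij
    have hij' : h i.succ < h j.succ := hij
    have h1 : i ≠ j := by rintro rfl; exact lt_irrefl _ hij'
    have h2 : f i ≠ j.succ := by
      intro he
      have := hh i
      rw [he] at this
      omega
    simp [Mf, h1, h2]
  rw [hb.det]
  apply Finset.prod_eq_one
  intro a _
  have : (Mf f).toSquareBlock (fun i => OrderDual.toDual (h i.succ)) a = 1 := by
    ext ⟨i, hi⟩ ⟨j, hj⟩
    have h2 : f i ≠ j.succ := by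
      intro he
      have := hh i
      rw [he] at this
      have h3 : h i.succ = h j.succ := by
        have := hi.trans hj.symm
        exact this
      omega
    simp [Mf, toSquareBlock_def, h2, Matrix.one_apply]
  rw [this, det_one]

lemma det_Mf_of_not_acy {n : ℕ} (f : Fin n → Fin (n + 1)) (hf : ¬ AcyF f) :
    (Mf f).det = 0 := by
  classical
  let F : Fin (n + 1) → Fin (n + 1) := Fin.cons 0 f
  have hF0 : F 0 = 0 := rfl
  have hFs : ∀ i, F i.succ = f i := fun i => rfl
  let R : Fin (n + 1) → Prop := fun v => ∃ k, F^[k] v = 0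
  have hR0 : R 0 := ⟨0, rfl⟩
  have hRs : ∀ i : Fin n, R (f i) ↔ R i.succ := by
    intro i
    constructor
    · rintro ⟨k, hk⟩
      exact ⟨k + 1, by rw [Function.iterate_succ_apply, hFs]; exact hk⟩
    · rintro ⟨k, hk⟩
      cases k with
      | zero => exact absurd hk (Fin.succ_ne_zero i)
      | succ k => exact ⟨k, by rw [Function.iterate_succ_apply, hFs] at hk; exact hk⟩
  have hex : ∃ i : Fin n, ¬ R i.succ := by
    by_contra hall
    push Not at hall
    have hall' : ∀ v, R v := fun v => Fin.cases hR0 hall v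
    apply hf
    refine ⟨fun v => Nat.find (hall' v), fun i => ?_⟩
    have hs := Nat.find_spec (hall' i.succ)
    rcases hk : Nat.find (hall' i.succ) with _ | k
    · rw [hk] at hs
      exact absurd hs (Fin.succ_ne_zero i)
    · rw [hk, Function.iterate_succ_apply, hFs] at hs
      have := Nat.find_min' (hall' (f i)) hs
      show Nat.find (hall' (f i)) < Nat.find (hall' i.succ)
      omega
  obtain ⟨i0, hi0⟩ := hex
  rw [← Matrix.exists_mulVec_eq_zero_iff]
  refine ⟨fun i => if R i.succ then 0 else 1, ?_, ?_⟩
  · intro h0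
    have := congrFun h0 i0
    simp [hi0] at this
  · funext i
    have h1 : ∀ v : Fin (n + 1), (∑ k : Fin n, (if v = k.succ then (1 : ℝ) else 0) *
        (if R k.succ then 0 else 1)) = if R v then 0 else 1 := by
      intro v
      refine Fin.cases ?_ (fun j => ?_) v
      · simp [hR0, (Fin.succ_ne_zero _).symm]
      · rw [Finset.sum_eq_single j]
        · simp
        · intro b _ hb
          simp [hb.symm]
        · simp
    have h2 := h1 (f i)
    have h3 := h1 i.succ
    simp only [Fin.succ_inj] at h3
    simp only [mulVec, dotProduct, Mf, of_apply, sub_mul, Finset.sum_sub_distrib, h2, h3, hRs i,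
      Pi.zero_apply, sub_self]

/-- reduced Laplacian -/
noncomputable def Lred {n : ℕ} (Q : Matrix (Fin (n + 1)) (Fin (n + 1)) ℝ) :
    Matrix (Fin n) (Fin n) ℝ :=
  (thetaOf Q).submatrix Fin.succ Fin.succ

open Classical in
lemma det_Lred {n : ℕ} (Q : Matrix (Fin (n + 1)) (Fin (n + 1)) ℝ) (hd : ∀ i, Q i i = 0) :
    (Lred Q).det = ∑ f ∈ univ.filter (fun f : Fin n → Fin (n + 1) => AcyF f),
      ∏ i, Q i.succ (f i) := by
  have hrow : Lred Q = fun i => ∑ j : Fin (n + 1), Q i.succ j •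
      (fun k : Fin n => (if i = k then (1 : ℝ) else 0) - (if j = k.succ then 1 else 0)) := by
    funext i k
    simp only [Finset.sum_apply, Pi.smul_apply, smul_eq_mul, mul_sub, Finset.sum_sub_distrib,
      Lred, submatrix_apply, thetaOf, of_apply, Fin.succ_inj, mul_ite, mul_one, mul_zero,
      Finset.sum_ite_eq', mem_univ, if_true]
    by_cases h : i = k
    · subst h
      simp [hd, Finset.sum_filter]
      apply Finset.sum_congr rfl
      intro l _
      split_ifs with h
      · rw [h, hd]
      · rfl
    · simp [h]
  have h1 : (Lred Q).det = ∑ f : Fin n → Fin (n + 1), (∏ i, Q i.succ (f i)) * (Mf f).det := by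
    rw [hrow]
    have := (Matrix.detRowAlternating (n := Fin n) (R := ℝ)).toMultilinearMap.map_sum
      (fun (i : Fin n) (j : Fin (n + 1)) => Q i.succ j •
      (fun k : Fin n => (if i = k then (1 : ℝ) else 0) - (if j = k.succ then 1 else 0)))
    refine Eq.trans this ?_
    refine Finset.sum_congr rfl fun f _ => ?_
    exact (Matrix.detRowAlternating (n := Fin n) (R := ℝ)).toMultilinearMap.map_smul_univ
      (fun i => Q i.succ (f i)) (fun i => (fun k : Fin n => (if i = k then (1 : ℝ) else 0)
        - (if f i = k.succ then 1 else 0)))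
  rw [h1, Finset.sum_filter]
  refine Finset.sum_congr rfl fun f _ => ?_
  split_ifs with h
  · rw [det_Mf_of_acy f h, mul_one]
  · rw [det_Mf_of_not_acy f h, mul_zero]

/-- the graph of a parent function -/
def Gf {n : ℕ} (f : Fin n → Fin (n + 1)) : SimpleGraph (Fin (n + 1)) where
  Adj a b := a ≠ b ∧ ((∃ i, a = Fin.succ i ∧ b = f i) ∨ (∃ i, b = Fin.succ i ∧ a = f i))
  symm := ⟨fun _ _ h => ⟨h.1.symm, h.2.symm⟩⟩
  loopless := ⟨fun _ h => h.1 rfl⟩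

lemma Gf_adj {n : ℕ} {f : Fin n → Fin (n + 1)} (hf : AcyF f) (i : Fin n) :
    (Gf f).Adj i.succ (f i) := by
  obtain ⟨h, hh⟩ := hf
  refine ⟨fun he => ?_, Or.inl ⟨i, rfl, rfl⟩⟩
  have := hh i
  rw [← he] at this
  omega

lemma Gf_connected {n : ℕ} {f : Fin n → Fin (n + 1)} (hf : AcyF f) : (Gf f).Connected := by
  have hadj := Gf_adj hf
  obtain ⟨h, hh⟩ := hf
  have key : ∀ m v, h v = m → (Gf f).Reachable v 0 := by
    intro m
    induction m using Nat.strong_induction_on with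
    | _ m ih =>
      intro v
      refine Fin.cases (fun _ => SimpleGraph.Reachable.refl _) (fun i hi => ?_) v
      exact (hadj i).reachable.trans (ih _ (hi ▸ hh i) _ rfl)
  have : Nonempty (Fin (n + 1)) := ⟨0⟩
  exact SimpleGraph.Connected.mk fun u v => (key _ u rfl).trans (key _ v rfl).symm

lemma Gf_edge_inj {n : ℕ} {f : Fin n → Fin (n + 1)} (hf : AcyF f) :
    Function.Injective (fun i : Fin n => s(i.succ, f i)) := by
  obtain ⟨h, hh⟩ := hf
  intro i j hij
  simp only [Sym2.eq_iff, Fin.succ_inj] at hij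
  rcases hij with h1 | h1
  · exact h1.1
  · have h2 := hh i
    have h3 := hh j
    rw [h1.2] at h2
    rw [← h1.1] at h3
    omega

lemma Gf_edgeSet {n : ℕ} {f : Fin n → Fin (n + 1)} (hf : AcyF f) :
    (Gf f).edgeSet = Set.range (fun i : Fin n => s(i.succ, f i)) := by
  ext e
  induction e using Sym2.ind with
  | _ a b =>
    rw [SimpleGraph.mem_edgeSet]
    constructor
    · rintro ⟨_, ⟨i, rfl, rfl⟩ | ⟨i, rfl, rfl⟩⟩
      · exact ⟨i, rfl⟩
      · exact ⟨i, Sym2.eq_swap⟩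
    · rintro ⟨i, hi⟩
      rw [← SimpleGraph.mem_edgeSet, ← hi, SimpleGraph.mem_edgeSet]
      exact Gf_adj hf i

lemma Gf_card {n : ℕ} {f : Fin n → Fin (n + 1)} (hf : AcyF f) :
    Nat.card (Gf f).edgeSet = n := by
  rw [Gf_edgeSet hf, Nat.card_range_of_injective (Gf_edge_inj hf), Nat.card_eq_fintype_card,
    Fintype.card_fin]

lemma Gf_isTree {n : ℕ} {f : Fin n → Fin (n + 1)} (hf : AcyF f) : (Gf f).IsTree := by
  rw [SimpleGraph.isTree_iff_connected_and_card]
  exact ⟨Gf_connected hf, by rw [Gf_card hf, Nat.card_eq_fintype_card, Fintype.card_fin]⟩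

lemma Gf_inj {n : ℕ} {f g : Fin n → Fin (n + 1)} (hf : AcyF f) (he : Gf f = Gf g) : f = g := by
  have hadj := Gf_adj hf
  obtain ⟨h, hh⟩ := hf
  have key : ∀ m i, h (Fin.succ i) = m → f i = g i := by
    intro m
    induction m using Nat.strong_induction_on with
    | _ m ih =>
      intro i hi
      have h1 := hadj i
      rw [he] at h1
      rcases h1.2 with ⟨j, hj, hj'⟩ | ⟨j, hj, hj'⟩
      · rw [Fin.succ_inj] at hj
        rw [hj', hj]
      · exfalso
        have h2 := hh i
        rw [hj] at h2
        have h3 := ih _ (hi ▸ h2) j rfl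
        have h4 := hh j
        rw [h3, ← hj'] at h4
        omega
  funext i
  exact key _ i rfl

lemma Gf_surj {n : ℕ} {T : SimpleGraph (Fin (n + 1))} (hT : T.IsTree) :
    ∃ f, AcyF f ∧ Gf f = T := by
  have hex : ∀ i : Fin n, ∃ w, T.Adj i.succ w ∧ T.dist w 0 < T.dist i.succ 0 := by
    intro i
    obtain ⟨p, hp⟩ := hT.connected.exists_walk_length_eq_dist i.succ 0
    cases p with
    | cons hadj q =>
      refine ⟨_, hadj, ?_⟩
      have := SimpleGraph.dist_le q
      rw [← hp, SimpleGraph.Walk.length_cons]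
      omega
  choose f hf1 hf2 using hex
  have hf : AcyF f := ⟨fun v => T.dist v 0, hf2⟩
  refine ⟨f, hf, ?_⟩
  have hsub : (Gf f).edgeSet ⊆ T.edgeSet := by
    rw [Gf_edgeSet hf]
    rintro _ ⟨i, rfl⟩
    exact hf1 i
  have hc := (SimpleGraph.isTree_iff_connected_and_card.1 hT).2
  rw [Nat.card_eq_fintype_card (α := Fin (n + 1)), Fintype.card_fin] at hc
  have := Set.eq_of_subset_of_ncard_le hsub (by
    rw [← Nat.card_coe_set_eq, ← Nat.card_coe_set_eq, Gf_card hf]; omega) (Set.toFinite _)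
  exact SimpleGraph.edgeSet_injective this

open Classical in
lemma Gf_prod {n : ℕ} {f : Fin n → Fin (n + 1)} (hf : AcyF f)
    (Q : Matrix (Fin (n + 1)) (Fin (n + 1)) ℝ) (hQ : Q.IsSymm) :
    ∏ i, Q i.succ (f i) = ∏ p ∈ univ.filter
      (fun p : Fin (n + 1) × Fin (n + 1) => p.1 < p.2 ∧ (Gf f).Adj p.1 p.2), Q p.1 p.2 := by
  refine Finset.prod_bij (fun i _ => if i.succ < f i then (i.succ, f i) else (f i, i.succ))
    ?_ ?_ ?_ ?_
  · intro i _
    have h := Gf_adj hf i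
    split_ifs with hlt
    · simp [hlt, h]
    · simpa using ⟨lt_of_le_of_ne (not_lt.1 hlt) h.1.symm, h.symm⟩
  · intro i _ j _ hij
    apply Gf_edge_inj hf
    have := congrArg (fun p : Fin (n + 1) × Fin (n + 1) => s(p.1, p.2)) hij
    have h3 : ∀ i : Fin n, (fun p : Fin (n + 1) × Fin (n + 1) => s(p.1, p.2))
        (if i.succ < f i then (i.succ, f i) else (f i, i.succ)) = s(i.succ, f i) := by
      intro i
      split_ifs
      · rfl
      · exact Sym2.eq_swap
    exact (h3 i).symm.trans (this.trans (h3 j))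
  · rintro ⟨a, b⟩ hp
    simp only [mem_filter, mem_univ, true_and] at hp
    obtain ⟨hlt, _, ⟨i, rfl, rfl⟩ | ⟨i, rfl, rfl⟩⟩ := hp
    · exact ⟨i, mem_univ _, by simp [hlt]⟩
    · exact ⟨i, mem_univ _, by simp [hlt.le]⟩
  · intro i _
    split_ifs
    · rfl
    · exact hQ.apply _ _

lemma tau_eq_det {n : ℕ} (Q : Matrix (Fin (n + 1)) (Fin (n + 1)) ℝ) (hQ : Q.IsSymm)
    (hd : ∀ i, Q i i = 0) : tau Q = (Lred Q).det := by
  classical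
  rw [det_Lred Q hd, tau]
  symm
  refine Finset.sum_bij (fun f _ => Gf f) ?_ ?_ ?_ ?_
  · intro f hf
    simp only [mem_filter, mem_univ, true_and] at hf ⊢
    exact Gf_isTree hf
  · intro f hf g _ he
    simp only [mem_filter, mem_univ, true_and] at hf
    exact Gf_inj hf he
  · intro T hT
    simp only [mem_filter, mem_univ, true_and] at hT
    obtain ⟨f, hf, h⟩ := Gf_surj hT
    exact ⟨f, by simpa using hf, h⟩
  · intro f hf
    simp only [mem_filter, mem_univ, true_and] at hf
    rw [Gf_prod hf Q hQ]

/-! ### Determinant / trace inequality -/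

open scoped MatrixOrder in
lemma posDef_factor {n : ℕ} {L : Matrix (Fin n) (Fin n) ℝ} (hL : L.PosDef) :
    ∃ y : Matrix (Fin n) (Fin n) ℝ, IsUnit y ∧ L = yᵀ * y := by
  obtain ⟨y, hy, h⟩ := CStarAlgebra.isStrictlyPositive_iff_eq_star_mul_self.mp
        hL.isStrictlyPositive
  refine ⟨y, hy, ?_⟩
  rw [h, star_eq_conjTranspose, conjTranspose_eq_transpose_of_trivial]

lemma posDef_trace_log {n : ℕ} {M : Matrix (Fin n) (Fin n) ℝ} (hM : M.PosDef) :
    0 ≤ M.trace - n - Real.log M.det ∧ (M.trace - n - Real.log M.det = 0 ↔ M = 1) := by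
  have hp := hM.eigenvalues_pos
  have hE : M.trace - n - Real.log M.det =
      ∑ i, (hM.1.eigenvalues i - 1 - Real.log (hM.1.eigenvalues i)) := by
    rw [hM.1.trace_eq_sum_eigenvalues, hM.1.det_eq_prod_eigenvalues]
    simp only [RCLike.ofReal_real_eq_id, id]
    rw [Real.log_prod (fun i _ => (hp i).ne'), Finset.sum_sub_distrib, Finset.sum_sub_distrib]
    simp
  have hnn : ∀ i, 0 ≤ hM.1.eigenvalues i - 1 - Real.log (hM.1.eigenvalues i) := fun i => by
    linarith [Real.log_le_sub_one_of_pos (hp i)]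
  refine ⟨hE ▸ Finset.sum_nonneg fun i _ => hnn i, fun h => ?_, fun h => ?_⟩
  · rw [hE, Finset.sum_eq_zero_iff_of_nonneg fun i _ => hnn i] at h
    have h1 : ∀ i, hM.1.eigenvalues i = 1 := by
      intro i
      by_contra hne
      have := Real.log_lt_sub_one_of_pos (hp i) hne
      have := h i (mem_univ i)
      linarith
    have h2 : hM.1.eigenvalues = fun _ => 1 := funext h1
    rw [hM.1.spectral_theorem, h2]
    have : (diagonal (RCLike.ofReal ∘ fun _ : Fin n => (1 : ℝ)) : Matrix (Fin n) (Fin n) ℝ) = 1 := by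
      ext i j
      simp [diagonal_apply, one_apply]
    rw [this, map_one]
  · rw [h]
    simp

lemma posDef_pair {n : ℕ} {B L : Matrix (Fin n) (Fin n) ℝ} (hB : B.PosDef) (hL : L.PosDef) :
    0 ≤ (L * B).trace - n - Real.log B.det - Real.log L.det ∧
    ((L * B).trace - n - Real.log B.det - Real.log L.det = 0 ↔ L * B = 1) := by
  obtain ⟨y, hy, rfl⟩ := posDef_factor hL
  have hM : (y * B * yᵀ).PosDef := by
    have := hB.mul_mul_conjTranspose_same (B := y)
      (by rw [Matrix.vecMul_injective_iff_isUnit]; exact hy)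
    rwa [conjTranspose_eq_transpose_of_trivial] at this
  have ht : (y * B * yᵀ).trace = (yᵀ * y * B).trace := by
    rw [Matrix.trace_mul_comm, Matrix.mul_assoc]
  have hdt : Real.log (y * B * yᵀ).det = Real.log B.det + Real.log (yᵀ * y).det := by
    rw [← Real.log_mul hB.det_pos.ne' hL.det_pos.ne', det_mul, det_mul, det_mul]
    ring_nf
  have h1 : y * B * yᵀ = 1 ↔ yᵀ * y * B = 1 := by
    rw [mul_eq_one_comm, Matrix.mul_assoc]
  have := posDef_trace_log hM
  rw [ht, hdt, h1] at this
  convert this using 2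
  · ring
  · ring_nf

/-! ### Cayley-Menger determinant -/

/-- Gram matrix with base vertex 0 -/
noncomputable def Bred {n : ℕ} (G : Matrix (Fin (n + 1)) (Fin (n + 1)) ℝ) :
    Matrix (Fin n) (Fin n) ℝ :=
  Matrix.of fun i j => (G i.succ 0 + G 0 j.succ - G i.succ j.succ) / 2

lemma det_CM {n : ℕ} (G : Matrix (Fin (n + 1)) (Fin (n + 1)) ℝ) (h0 : ∀ i, G i i = 0) :
    (CM G).det = (Bred G).det := by
  let φ : Fin 2 ⊕ Fin n → Fin (n + 2) :=
    Sum.elim ![0, Fin.last _] (fun i => i.succ.castSucc)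
  have hφ : Function.Injective φ := by
    rintro (a | a) (b | b) h
    · fin_cases a <;> fin_cases b <;> simp [φ, Fin.ext_iff] at h ⊢
    · fin_cases a <;> simp [φ, Fin.ext_iff] at h ⊢
      omega
    · fin_cases b <;> simp [φ, Fin.ext_iff] at h ⊢
      omega
    · simp [φ, Fin.ext_iff] at h ⊢
      omega
  let e : Fin 2 ⊕ Fin n ≃ Fin (n + 2) := Equiv.ofBijective φ
    ((Fintype.bijective_iff_injective_and_card φ).2 ⟨hφ, by simp [add_comm]⟩)
  let J : Matrix (Fin 2) (Fin 2) ℝ := !![0, 1; -1, 0]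
  let K : Matrix (Fin 2) (Fin 2) ℝ := !![0, -1; 1, 0]
  have hJK : J * K = 1 := by ext i j; fin_cases i <;> fin_cases j <;> simp [J, K]
  have hKJ : K * J = 1 := by ext i j; fin_cases i <;> fin_cases j <;> simp [J, K]
  let _ : Invertible J := ⟨K, hKJ, hJK⟩
  let U : Matrix (Fin 2) (Fin n) ℝ := Matrix.of ![fun j => - G 0 j.succ / 2, fun _ => -1]
  let V : Matrix (Fin n) (Fin 2) ℝ := Matrix.of fun i => ![- G i.succ 0 / 2, 1]
  let D : Matrix (Fin n) (Fin n) ℝ := Matrix.of fun i j => - G i.succ j.succ / 2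
  have hblock : (CM G).submatrix e e = fromBlocks J U V D := by
    ext a b
    rcases a with a | a <;> rcases b with b | b
    · fin_cases a <;> fin_cases b <;> simp [e, φ, CM, J, h0]
    · fin_cases a <;> simp [e, φ, CM, U]
      rfl
    · fin_cases b <;> simp [e, φ, CM, V]
      rfl
    · simp [e, φ, CM, D]
      rfl
  rw [← det_submatrix_equiv_self e, hblock, det_fromBlocks₁₁]
  have hJ : J.det = 1 := by simp [J]
  rw [hJ, one_mul]
  congr 1
  ext i j
  have : (⅟J) = K := rfl
  rw [this]
  simp [Bred, D, V, K, U, Matrix.mul_apply, Fin.sum_univ_two]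
  ring

/-! ### Relation between Laplacian / variogram and reduced versions -/

lemma theta_row_sum {d : ℕ} (Q : Matrix (Fin d) (Fin d) ℝ) (i : Fin d) :
    ∑ j, thetaOf Q i j = 0 := by
  rw [← Finset.add_sum_erase _ _ (mem_univ i)]
  simp only [thetaOf, of_apply, if_true]
  have : ∀ j ∈ univ.erase i, (if i = j then ∑ l ∈ univ.filter (fun l => l ≠ i), Q i l else -Q i j)
      = - Q i j := by
    intro j hj
    rw [if_neg (Finset.ne_of_mem_erase hj).symm]
  rw [Finset.sum_congr rfl this, Finset.sum_neg_distrib]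
  have h2 : univ.filter (fun l => l ≠ i) = univ.erase i := by
    ext; simp
  rw [h2]; ring

lemma theta_symm {d : ℕ} {Q : Matrix (Fin d) (Fin d) ℝ} (hQ : Q.IsSymm) (i j : Fin d) :
    thetaOf Q i j = thetaOf Q j i := by
  by_cases h : i = j
  · rw [h]
  · simp [thetaOf, h, Ne.symm h, hQ.apply j i]

lemma sinner_eq {d : ℕ} {A B : Matrix (Fin d) (Fin d) ℝ} (hA : A.IsSymm) (hB : B.IsSymm)
    (h0 : ∀ i, A i i = 0) : ∑ i, ∑ j, A i j * B i j = 2 * sinner A B := by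
  rw [← Finset.sum_product', Finset.univ_product_univ]
  have h1 : ∑ p : Fin d × Fin d, A p.1 p.2 * B p.1 p.2 =
      sinner A B + ∑ p ∈ univ.filter (fun p : Fin d × Fin d => p.2 < p.1), A p.1 p.2 * B p.1 p.2 := by
    rw [sinner, Finset.sum_filter, Finset.sum_filter, ← Finset.sum_add_distrib]
    refine Finset.sum_congr rfl fun p _ => ?_
    rcases lt_trichotomy p.1 p.2 with h | h | h
    · simp [h, h.not_gt]
    · simp [h, h0]
    · simp [h, h.not_gt]
  have h2 : ∑ p ∈ univ.filter (fun p : Fin d × Fin d => p.2 < p.1), A p.1 p.2 * B p.1 p.2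
      = sinner A B := by
    rw [sinner]
    refine Finset.sum_bij' (fun p _ => p.swap) (fun p _ => p.swap) ?_ ?_ ?_ ?_ ?_ <;>
      simp [hA.apply, hB.apply]
  rw [h1, h2]; ring

lemma trace_eq {n : ℕ} {G Q : Matrix (Fin (n + 1)) (Fin (n + 1)) ℝ} (hG : G.IsSymm)
    (hQ : Q.IsSymm) (h0 : ∀ i, G i i = 0) :
    (Lred Q * Bred G).trace = sinner G Q := by
  have hfull : ∑ i, ∑ j, thetaOf Q i j * ((G j 0 + G 0 i - G j i) / 2) = sinner G Q := by
    have e1 : ∑ i, ∑ j, thetaOf Q i j * ((G j 0 + G 0 i - G j i) / 2) =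
        (1 / 2) * (∑ j, (∑ i, thetaOf Q j i) * G j 0) + (1 / 2) * (∑ i, (∑ j, thetaOf Q i j) * G 0 i)
        - (1 / 2) * ∑ i, ∑ j, G i j * thetaOf Q i j := by
      simp only [Finset.sum_mul, Finset.mul_sum]
      rw [Finset.sum_comm (f := fun j i => (1 / 2) * (thetaOf Q j i * G j 0)),
        ← Finset.sum_add_distrib, ← Finset.sum_sub_distrib]
      refine Finset.sum_congr rfl fun i _ => ?_
      rw [← Finset.sum_add_distrib, ← Finset.sum_sub_distrib]
      refine Finset.sum_congr rfl fun j _ => ?_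
      rw [theta_symm hQ j i, hG.apply i j]
      ring
    have e2 : ∑ i, ∑ j, G i j * thetaOf Q i j = - ∑ i, ∑ j, G i j * Q i j := by
      rw [← Finset.sum_neg_distrib]
      refine Finset.sum_congr rfl fun i _ => ?_
      rw [← Finset.sum_neg_distrib]
      refine Finset.sum_congr rfl fun j _ => ?_
      by_cases h : i = j
      · simp [h, h0]
      · simp [thetaOf, h]
    rw [e1, e2, sinner_eq hG hQ h0]
    simp [theta_row_sum]
  rw [← hfull, Fin.sum_univ_succ]
  have : ∑ j, thetaOf Q 0 j * ((G j 0 + G 0 0 - G j 0) / 2) = 0 := by simp [h0]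
  rw [this, zero_add]
  simp only [trace, Matrix.diag, Matrix.mul_apply]
  refine Finset.sum_congr rfl fun i _ => ?_
  rw [Fin.sum_univ_succ]
  simp [h0, Lred, Bred]

lemma Bred_gamma {n : ℕ} {Q S : Matrix (Fin (n + 1)) (Fin (n + 1)) ℝ} (hS : isSigmaOf Q S) :
    Lred Q * Bred (gammaOf S) = 1 := by
  obtain ⟨hsym, _, hP⟩ := hS
  ext i k
  have hB : ∀ j k : Fin n, Bred (gammaOf S) j k =
      S j.succ k.succ - S j.succ 0 + (S 0 0 - S 0 k.succ) := by
    intro j k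
    simp only [Bred, gammaOf, of_apply]
    ring
  have hfull : ∑ j, thetaOf Q i.succ j * (S j k.succ - S j 0 + (S 0 0 - S 0 k.succ)) =
      (1 : Matrix (Fin n) (Fin n) ℝ) i k := by
    have e1 := congrFun (congrFun hP i.succ) k.succ
    have e2 := congrFun (congrFun hP i.succ) 0
    rw [Matrix.mul_apply] at e1 e2
    simp only [mul_add, mul_sub, Finset.sum_add_distrib, Finset.sum_sub_distrib, e1, e2,
      ← Finset.sum_mul, theta_row_sum]
    simp [Pmat, Matrix.one_apply]
  rw [← hfull, Matrix.mul_apply, Fin.sum_univ_succ]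
  simp [hB, Lred]

lemma Bred_inj {n : ℕ} {G H : Matrix (Fin (n + 1)) (Fin (n + 1)) ℝ} (hG : G.IsSymm)
    (hH : H.IsSymm) (hG0 : ∀ i, G i i = 0) (hH0 : ∀ i, H i i = 0) (h : Bred G = Bred H) :
    G = H := by
  have key : ∀ i j : Fin n, (G i.succ 0 + G 0 j.succ - G i.succ j.succ) / 2 =
      (H i.succ 0 + H 0 j.succ - H i.succ j.succ) / 2 := fun i j => congrFun (congrFun h i) j
  have h1 : ∀ i : Fin n, G i.succ 0 = H i.succ 0 := by
    intro i
    have := key i i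
    rw [hG0, hH0, hG.apply i.succ 0, hH.apply i.succ 0] at this
    linarith
  have h2 : ∀ i : Fin n, G 0 i.succ = H 0 i.succ := by
    intro i
    rw [hG.apply i.succ 0, hH.apply i.succ 0, h1]
  ext i j
  refine Fin.cases ?_ (fun i => ?_) i <;> refine Fin.cases ?_ (fun j => ?_) j
  · rw [hG0, hH0]
  · exact h2 j
  · exact h1 i
  · have := key i j
    rw [h1, h2] at this
    linarith

lemma Bred_posDef {n : ℕ} {G : Matrix (Fin (n + 1)) (Fin (n + 1)) ℝ} (hG : G.IsSymm)
    (h0 : ∀ i, G i i = 0)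
    (hneg : ∀ x : Fin (n + 1) → ℝ, x ≠ 0 → (∑ i, x i) = 0 → x ⬝ᵥ G.mulVec x < 0) :
    (Bred G).PosDef := by
  refine PosDef.of_dotProduct_mulVec_pos ?_ ?_
  · ext i j
    simp only [conjTranspose_apply, star_trivial, Bred, of_apply]
    rw [hG.apply j.succ i.succ, hG.apply i.succ 0, hG.apply 0 j.succ]
    ring
  · intro x hx
    have hx' : (Fin.cons (-∑ i, x i) x : Fin (n + 1) → ℝ) ≠ 0 := by
      intro h
      apply hx
      funext i
      exact congrFun h i.succ
    have := hneg _ hx' (by simp [Fin.sum_univ_succ])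
    have e : (Fin.cons (-∑ i, x i) x : Fin (n + 1) → ℝ) ⬝ᵥ G.mulVec (Fin.cons (-∑ i, x i) x)
        = - 2 * (star x ⬝ᵥ (Bred G).mulVec x) := by
      have r1 : star x ⬝ᵥ (Bred G).mulVec x =
          (1 / 2) * ((∑ i, x i * G i.succ 0) * (∑ i, x i)) +
          (1 / 2) * ((∑ i, x i) * (∑ j, G 0 j.succ * x j))
          - (1 / 2) * ∑ i, x i * ∑ j, G i.succ j.succ * x j := by
        simp only [dotProduct, mulVec, star_trivial, Bred, of_apply]
        rw [Finset.sum_mul_sum, Finset.sum_mul_sum]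
        simp only [Finset.mul_sum]
        rw [← Finset.sum_add_distrib, ← Finset.sum_sub_distrib]
        refine Finset.sum_congr rfl fun i _ => ?_
        rw [← Finset.sum_add_distrib, ← Finset.sum_sub_distrib]
        refine Finset.sum_congr rfl fun j _ => ?_
        ring
      rw [r1]
      simp only [dotProduct, mulVec, Fin.sum_univ_succ, Fin.cons_zero, Fin.cons_succ, h0, mul_add,
        Finset.sum_add_distrib]
      have r2 : ∑ i : Fin n, x i * (G i.succ 0 * -∑ i, x i) = - ((∑ i, x i * G i.succ 0) * (∑ i, x i)) := by
        simp only [mul_neg, Finset.sum_neg_distrib, ← mul_assoc, ← Finset.sum_mul]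
      rw [r2]
      ring
    rw [e] at this
    linarith

lemma Lred_posDef {n : ℕ} {Q : Matrix (Fin (n + 1)) (Fin (n + 1)) ℝ} (hQ : memQ Q) :
    (Lred Q).PosDef := by
  obtain ⟨hsym, _, hpos⟩ := hQ
  refine PosDef.of_dotProduct_mulVec_pos ?_ ?_
  · ext i j
    simp only [conjTranspose_apply, star_trivial, Lred, submatrix_apply]
    exact theta_symm hsym _ _
  · intro x hx
    -- shift `(0, x)` by a constant so that it sums to zero
    let c : ℝ := (∑ i, x i) / (n + 1)
    let z : Fin (n + 1) → ℝ := Fin.cons 0 x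
    let y : Fin (n + 1) → ℝ := fun v => z v - c
    have hy : y ≠ 0 := by
      intro h
      apply hx
      have h1 : c = 0 := by
        have := congrFun h 0
        simpa [y, z] using this
      funext i
      have := congrFun h i.succ
      simpa [y, z, h1] using this
    have hn : (n + 1 : ℝ) ≠ 0 := by positivity
    have hs : ∑ v, y v = 0 := by
      simp only [y, Finset.sum_sub_distrib]
      simp [z, Fin.sum_univ_succ, c]
      field_simp
      ring
    have := hpos y hy hs
    have e1 : (thetaOf Q).mulVec y = (thetaOf Q).mulVec z := by
      funext i
      simp only [mulVec, dotProduct, y, mul_sub, Finset.sum_sub_distrib, ← Finset.sum_mul,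
        theta_row_sum]
      ring
    have e2 : ∑ i, (thetaOf Q).mulVec z i = 0 := by
      show ∑ i, ∑ j, thetaOf Q i j * z j = 0
      rw [Finset.sum_comm]
      refine Finset.sum_eq_zero fun j _ => ?_
      rw [← Finset.sum_mul, Finset.sum_congr rfl fun i _ => theta_symm hsym i j, theta_row_sum,
        zero_mul]
    have e3 : y ⬝ᵥ (thetaOf Q).mulVec z = z ⬝ᵥ (thetaOf Q).mulVec z := by
      simp only [dotProduct, y, sub_mul, Finset.sum_sub_distrib, ← Finset.mul_sum, e2]
      ring
    rw [e1, e3] at this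
    have e4 : star x ⬝ᵥ (Lred Q).mulVec x = z ⬝ᵥ (thetaOf Q).mulVec z := by
      simp [dotProduct, mulVec, z, Fin.sum_univ_succ, Lred]
    rw [e4]
    exact this

/-- The surrogate Kullback–Leibler divergence
`KL(Γ₁, Q₂) = (1/2)⟨Γ₁, Q₂⟩ − (d−1)/2 − (1/2)log det(CM(Γ₁)) − (1/2)log τ(Q₂)`
is nonnegative, with equality if and only if `Γ₁ = Γ(Q₂)`. -/
theorem surrogate_KL_nonneg {d : ℕ} (hd : 0 < d)
    (Γ₁ Q₂ S₂ : Matrix (Fin d) (Fin d) ℝ)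
    (h1sym : Γ₁.IsSymm) (h1diag : ∀ i, Γ₁ i i = 0)
    (h1scnd : ∀ x : Fin d → ℝ, x ≠ 0 → (∑ i, x i) = 0 → x ⬝ᵥ Γ₁.mulVec x < 0)
    (hQ₂ : memQ Q₂) (hS₂ : isSigmaOf Q₂ S₂) :
    0 ≤ (1 / 2) * sinner Γ₁ Q₂ - ((d : ℝ) - 1) / 2
        - (1 / 2) * Real.log ((CM Γ₁).det) - (1 / 2) * Real.log (tau Q₂) ∧
    ((1 / 2) * sinner Γ₁ Q₂ - ((d : ℝ) - 1) / 2
        - (1 / 2) * Real.log ((CM Γ₁).det) - (1 / 2) * Real.log (tau Q₂) = 0 ↔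
      Γ₁ = gammaOf S₂) := by
  obtain ⟨n, rfl⟩ : ∃ n, d = n + 1 := ⟨d - 1, by omega⟩
  have hB := Bred_posDef h1sym h1diag h1scnd
  have hL := Lred_posDef hQ₂
  obtain ⟨h1, h2⟩ := posDef_pair hB hL
  rw [trace_eq h1sym hQ₂.1 h1diag] at h1 h2
  rw [det_CM Γ₁ h1diag, tau_eq_det Q₂ hQ₂.1 hQ₂.2.1]
  have hS := Bred_gamma hS₂
  have heq : Lred Q₂ * Bred Γ₁ = 1 ↔ Γ₁ = gammaOf S₂ := by
    constructor
    · intro h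
      refine Bred_inj h1sym ?_ h1diag ?_ ?_
      · ext i j
        simp only [transpose_apply, gammaOf, of_apply, hS₂.1.apply i j]
        ring
      · intro i
        simp only [gammaOf, of_apply]
        ring
      · have h' := mul_eq_one_comm.1 h
        calc Bred Γ₁ = Bred Γ₁ * (Lred Q₂ * Bred (gammaOf S₂)) := by rw [hS, mul_one]
          _ = Bred (gammaOf S₂) := by rw [← mul_assoc, h', one_mul]
    · rintro rfl
      exact hS
  rw [← heq, ← h2]
  push_cast
  refine ⟨by linarith, fun h => by linarith, fun h => by linarith⟩
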